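/- Let d ≥ 2, let X be an ℝ^d-valued random vector whose law is absolutely continuous with respect to Lebesgue measure and whose support is all of ℝ^d, let γ ∈ (0,1), let M_γ = (1−γ)·inf over unit vectors u of P(⟨u, X⟩ ≥ ‖X‖·√(1−γ²)), and let α ∈ (0,1). Then for every q ∈ ℝ^d with q ≠ 0 such that HD(q|X) ≥ (1−α²)/M_γ, one has ‖E[(X − q)/‖X − q‖]‖ ≤ α. In other words, the halfspace depth region at level (1−α²)/M_γ (minus the origin) is contained in the set {q : ‖E[(X − q)/‖X − q‖]‖ ≤ α}. -/

import Mathlib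

/-!
Only the bounds `0 < M_γ ≤ 1` are needed.

*The index bound.* Put `U = (X - q)/‖X - q‖`, `m = ‖E U‖` and let `v` be the direction of `E U`.
Pointwise `⟨v, U⟩ ≤ 1 - 1{⟨-v, X - q⟩ ≥ 0}`, so integrating gives
`HD(q|X) ≤ P(⟨-v, X - q⟩ ≥ 0) ≤ 1 - m` (`halfspaceDepth_le_one_sub_norm`). Since `0 < M_γ ≤ 1`,
the depth hypothesis yields `1 - α² ≤ (1 - α²)/M_γ ≤ 1 - m`, whence `m ≤ α² ≤ α`.

*Positivity of `M_γ`* (`Mgamma_pos`). With a vanishing constant the quotient `(1 - α²)/M_γ` would be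
the junk value `0`, so this is where the full support of `X` enters. By compactness the unit sphere
has a finite net such that the cone around any unit vector contains a slightly narrower open cone
around a point of the net; finitely many nonempty open cones have probabilities bounded away
from `0`.
-/


open MeasureTheory
open scoped RealInnerProductSpace ProbabilityTheory

/-- The geometric constant `M_γ`:
`M_γ = (1−γ) ⋅ inf` over unit vectors `u` of `P(⟨u,X⟩ ≥ ‖X‖√(1−γ²))`. -/
noncomputable def Mgamma {d : ℕ} {Ω : Type*} [MeasureSpace Ω]
    (X : Ω → EuclideanSpace ℝ (Fin d)) (γ : ℝ) : ℝ :=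
  (1 - γ) * ⨅ u : Metric.sphere (0 : EuclideanSpace ℝ (Fin d)) 1,
    (ℙ {ω | ‖X ω‖ * Real.sqrt (1 - γ ^ 2) ≤
        ⟪(u : EuclideanSpace ℝ (Fin d)), X ω⟫}).toReal

/-- Halfspace (Tukey) depth of `x` with respect to `X`:
`HD(x|X) = inf` over unit vectors `v` of `P(⟨v, X − x⟩ ≥ 0)`. -/
noncomputable def halfspaceDepth {d : ℕ} {Ω : Type*} [MeasureSpace Ω]
    (X : Ω → EuclideanSpace ℝ (Fin d)) (x : EuclideanSpace ℝ (Fin d)) : ℝ :=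
  ⨅ v : Metric.sphere (0 : EuclideanSpace ℝ (Fin d)) 1,
    (ℙ {ω | 0 ≤ ⟪(v : EuclideanSpace ℝ (Fin d)), X ω - x⟫}).toReal

section Cones

variable {E : Type*} [NormedAddCommGroup E] [InnerProductSpace ℝ E]

/-- Tilting the axis of a cone by at most `(1 - s)/2` is compensated by lowering the cosine of its
half-angle from `(1 + s)/2` to `s`. -/
lemma narrow_cone_subset_cone {s : ℝ} {u w : E} (huw : ‖w - u‖ ≤ (1 - s) / 2) :
    {x : E | ‖x‖ * ((1 + s) / 2) < ⟪w, x⟫} ⊆ {x : E | ‖x‖ * s ≤ ⟪u, x⟫} := by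
  intro x hx
  simp only [Set.mem_ofPred_eq] at hx ⊢
  have h1 : ⟪w - u, x⟫ ≤ ‖w - u‖ * ‖x‖ := real_inner_le_norm _ _
  have h2 : ‖w - u‖ * ‖x‖ ≤ (1 - s) / 2 * ‖x‖ := by gcongr
  rw [inner_sub_left] at h1
  nlinarith

/-- Cones of a fixed half-angle have measure bounded away from zero, uniformly in the axis. -/
lemma exists_pos_le_measure_cone [FiniteDimensional ℝ E] [MeasurableSpace E]
    (μ : Measure E) [IsFiniteMeasure μ] [μ.IsOpenPosMeasure] {s : ℝ} (hs : s < 1) :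
    ∃ c : ℝ, 0 < c ∧ ∀ u ∈ Metric.sphere (0 : E) 1, c ≤ (μ {x : E | ‖x‖ * s ≤ ⟪u, x⟫}).toReal := by
  obtain ⟨t, ht, htfin, hcov⟩ := (isCompact_sphere (0 : E) 1).finite_cover_balls
    (e := (1 - s) / 2) (by linarith)
  have hpos : ∀ w ∈ t, 0 < (μ {x : E | ‖x‖ * ((1 + s) / 2) < ⟪w, x⟫}).toReal := by
    intro w hw
    have hw1 : ‖w‖ = 1 := by simpa using ht hw
    have hopen : IsOpen {x : E | ‖x‖ * ((1 + s) / 2) < ⟪w, x⟫} :=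
      isOpen_lt (by fun_prop) (by fun_prop)
    refine ENNReal.toReal_pos (hopen.measure_ne_zero μ ⟨w, ?_⟩) (measure_ne_top _ _)
    simp only [Set.mem_ofPred_eq, real_inner_self_eq_norm_sq, hw1]
    linarith
  have hstep : ∀ u ∈ Metric.sphere (0 : E) 1, ∃ w ∈ t,
      (μ {x : E | ‖x‖ * ((1 + s) / 2) < ⟪w, x⟫}).toReal ≤
        (μ {x : E | ‖x‖ * s ≤ ⟪u, x⟫}).toReal := by
    intro u hu
    obtain ⟨w, hw, huw⟩ := Set.mem_iUnion₂.1 (hcov hu)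
    refine ⟨w, hw, ENNReal.toReal_mono (measure_ne_top _ _) (measure_mono ?_)⟩
    apply narrow_cone_subset_cone
    rw [← dist_eq_norm, dist_comm]
    exact (Metric.mem_ball.1 huw).le
  rcases t.eq_empty_or_nonempty with rfl | hne
  · exact ⟨1, one_pos, fun u hu => by obtain ⟨w, hw, -⟩ := hstep u hu; exact hw.elim⟩
  · obtain ⟨w₀, hw₀, hmin⟩ := Set.exists_min_image t
      (fun w => (μ {x : E | ‖x‖ * ((1 + s) / 2) < ⟪w, x⟫}).toReal) htfin hne
    refine ⟨_, hpos w₀ hw₀, fun u hu => ?_⟩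
    obtain ⟨w, hw, hle⟩ := hstep u hu
    exact (hmin w hw).trans hle

end Cones

section Constants

variable {d : ℕ} {Ω : Type*} [MeasureSpace Ω] [IsProbabilityMeasure (ℙ : Measure Ω)]
  {X : Ω → EuclideanSpace ℝ (Fin d)}

lemma Mgamma_pos [Nonempty (Metric.sphere (0 : EuclideanSpace ℝ (Fin d)) 1)] (hX : Measurable X)
    (hsupp : (Measure.map X ℙ).IsOpenPosMeasure) {γ : ℝ} (hγ : γ ∈ Set.Ioo (0 : ℝ) 1) :
    0 < Mgamma X γ := by
  have hs : Real.sqrt (1 - γ ^ 2) < 1 := by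
    rw [Real.sqrt_lt' one_pos]
    nlinarith [hγ.1]
  have := Measure.isProbabilityMeasure_map (μ := (ℙ : Measure Ω)) hX.aemeasurable
  obtain ⟨c, hc, hle⟩ := exists_pos_le_measure_cone (Measure.map X ℙ) hs
  refine mul_pos (by linarith [hγ.2]) (hc.trans_le (le_ciInf fun u => ?_))
  have h := hle u u.2
  rwa [Measure.map_apply hX (measurableSet_le (by fun_prop) (by fun_prop))] at h

lemma Mgamma_le_one [Nonempty (Metric.sphere (0 : EuclideanSpace ℝ (Fin d)) 1)]
    {γ : ℝ} (hγ : γ ∈ Set.Ioo (0 : ℝ) 1) : Mgamma X γ ≤ 1 := by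
  have hinf : (⨅ u : Metric.sphere (0 : EuclideanSpace ℝ (Fin d)) 1,
      (ℙ {ω | ‖X ω‖ * Real.sqrt (1 - γ ^ 2) ≤
        ⟪(u : EuclideanSpace ℝ (Fin d)), X ω⟫}).toReal) ≤ 1 := by
    obtain ⟨u⟩ := ‹Nonempty (Metric.sphere (0 : EuclideanSpace ℝ (Fin d)) 1)›
    refine ciInf_le_of_le ⟨0, ?_⟩ u measureReal_le_one
    rintro _ ⟨u, rfl⟩
    exact ENNReal.toReal_nonneg
  have h0 : (0 : ℝ) ≤ ⨅ u : Metric.sphere (0 : EuclideanSpace ℝ (Fin d)) 1,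
      (ℙ {ω | ‖X ω‖ * Real.sqrt (1 - γ ^ 2) ≤
        ⟪(u : EuclideanSpace ℝ (Fin d)), X ω⟫}).toReal :=
    Real.iInf_nonneg fun _ => ENNReal.toReal_nonneg
  unfold Mgamma
  exact mul_le_one₀ (by linarith [hγ.1]) h0 hinf

/-- The halfspace whose outer normal is the direction of `E[(X - q)/‖X - q‖]` witnesses that the
depth is at most one minus the length of that vector. -/
lemma halfspaceDepth_le_one_sub_norm (hX : Measurable X) (q : EuclideanSpace ℝ (Fin d))
    (hne : (∫ ω, (‖X ω - q‖)⁻¹ • (X ω - q)) ≠ 0) :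
    halfspaceDepth X q ≤ 1 - ‖∫ ω, (‖X ω - q‖)⁻¹ • (X ω - q)‖ := by
  set U : Ω → EuclideanSpace ℝ (Fin d) := fun ω => (‖X ω - q‖)⁻¹ • (X ω - q) with hU
  set e := ∫ ω, U ω with he
  set v : EuclideanSpace ℝ (Fin d) := ‖e‖⁻¹ • e with hv
  have hv1 : ‖v‖ = 1 := norm_smul_inv_norm (𝕜 := ℝ) hne
  have hUm : Measurable U := by fun_prop
  have hU1 : ∀ ω, ‖U ω‖ ≤ 1 := fun ω => by
    rw [hU, norm_smul, norm_inv, norm_norm]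
    exact inv_mul_le_one
  have hUi : Integrable U ℙ := Integrable.of_bound hUm.aestronglyMeasurable 1 (ae_of_all _ hU1)
  set A : Set Ω := {ω | 0 ≤ ⟪-v, X ω - q⟫} with hA
  have hAm : MeasurableSet A := measurableSet_le (by fun_prop) (by fun_prop)
  have hdepth : halfspaceDepth X q ≤ (ℙ A).toReal := by
    refine ciInf_le (f := fun v : Metric.sphere (0 : EuclideanSpace ℝ (Fin d)) 1 =>
      (ℙ {ω | 0 ≤ ⟪(v : EuclideanSpace ℝ (Fin d)), X ω - q⟫}).toReal) ⟨0, ?_⟩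
      ⟨-v, by simp [hv1]⟩
    rintro _ ⟨u, rfl⟩
    exact ENNReal.toReal_nonneg
  have hpt : ∀ ω, ⟪v, U ω⟫ ≤ 1 - A.indicator 1 ω := by
    intro ω
    by_cases hω : ω ∈ A
    · have h0 : 0 ≤ ⟪-v, X ω - q⟫ := hω
      rw [inner_neg_left] at h0
      rw [Set.indicator_of_mem hω, Pi.one_apply, sub_self, hU, real_inner_smul_right]
      exact mul_nonpos_of_nonneg_of_nonpos (by positivity) (by linarith)
    · rw [Set.indicator_of_notMem hω, sub_zero]
      refine (real_inner_le_norm _ _).trans ?_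
      rw [hv1, one_mul]
      exact hU1 ω
  have hind : Integrable (A.indicator (1 : Ω → ℝ)) ℙ := (integrable_const (1 : ℝ)).indicator hAm
  have hint : ∫ ω, ⟪v, U ω⟫ ≤ ∫ ω, (1 - A.indicator (1 : Ω → ℝ) ω) :=
    integral_mono (hUi.const_inner v) ((integrable_const 1).sub hind) hpt
  have hve : ⟪v, e⟫ = ‖e‖ := by
    have : ‖e‖ ≠ 0 := norm_ne_zero_iff.2 hne
    rw [hv, real_inner_smul_left, real_inner_self_eq_norm_sq]
    field_simp
  rw [integral_inner hUi, ← he, hve, integral_sub (integrable_const 1) hind,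
    integral_indicator_one hAm] at hint
  simp only [integral_const, probReal_univ, smul_eq_mul, mul_one] at hint
  have : (ℙ A).toReal = (ℙ : Measure Ω).real A := rfl
  linarith

end Constants

/-- For a fully supported absolutely continuous `X` on `ℝ^d` (`d ≥ 2`), `γ ∈ (0,1)`
and `α ∈ (0,1)`: every `q ≠ 0` with halfspace depth `HD(q|X) ≥ (1−α²)/M_γ` satisfies
`‖E[(X−q)/‖X−q‖]‖ ≤ α`. -/
theorem depth_region_subset_small_index_region
    {d : ℕ} (hd : 2 ≤ d)
    {Ω : Type*} [MeasureSpace Ω] [IsProbabilityMeasure (ℙ : Measure Ω)]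
    (X : Ω → EuclideanSpace ℝ (Fin d)) (hX : Measurable X)
    (habs : Measure.map X ℙ ≪ (volume : Measure (EuclideanSpace ℝ (Fin d))))
    (hsupp : (Measure.map X ℙ).IsOpenPosMeasure)
    (γ : ℝ) (hγ : γ ∈ Set.Ioo (0 : ℝ) 1)
    (α : ℝ) (hα : α ∈ Set.Ioo (0 : ℝ) 1)
    (q : EuclideanSpace ℝ (Fin d)) (hq : q ≠ 0)
    (hdepth : (1 - α ^ 2) / Mgamma X γ ≤ halfspaceDepth X q) :
    ‖∫ ω, (‖X ω - q‖)⁻¹ • (X ω - q)‖ ≤ α := by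
  have : Nonempty (Metric.sphere (0 : EuclideanSpace ℝ (Fin d)) 1) :=
    ⟨⟨‖q‖⁻¹ • q, by simpa using norm_smul_inv_norm (𝕜 := ℝ) hq⟩⟩
  obtain ⟨hα0, hα1⟩ := hα
  by_cases hne : (∫ ω, (‖X ω - q‖)⁻¹ • (X ω - q)) = 0
  · rw [hne, norm_zero]
    exact hα0.le
  have h1 : 1 - α ^ 2 ≤ (1 - α ^ 2) / Mgamma X γ :=
    le_div_self (by nlinarith) (Mgamma_pos hX hsupp hγ) (Mgamma_le_one hγ)
  have h2 := halfspaceDepth_le_one_sub_norm hX q hne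
  nlinarith
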